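/- arXiv:2404.10143 — 2 statements merged into one kernel-verified Lean document; each statement's English description precedes it below -/
import Mathlib

section
/- Let K be a field of characteristic zero and m a positive integer. If b₀, …, b_{m−1} : ℕ → K are P-recursive sequences, then their interleaving s : ℕ → K, defined by s(m·q + j) = b_j(q) for all q ∈ ℕ and 0 ≤ j < m (equivalently, s(n) = b_{n mod m}((n − (n mod m))/m)), is P-recursive. -/
/-- A sequence `a : ℕ → K` is P-recursive (holonomic) if there exist `d` and
polynomials `p 0, …, p d`, not all zero, with
`∑ i, p i (n) * a (n + i) = 0` for all `n`. -/
def IsPRecursive {K : Type*} [Field K] (a : ℕ → K) : Prop :=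
  ∃ (d : ℕ) (p : Fin (d + 1) → Polynomial K),
    (∃ i, p i ≠ 0) ∧
    ∀ n : ℕ, ∑ i : Fin (d + 1), (p i).eval (n : K) * a (n + (i : ℕ)) = 0

/-!
Sequences form a module over `K[X]`, with `X` acting as multiplication by `n`, and P-recursiveness
of `a` is linear dependence of its shifts over `K[X]`. The shift operators are semilinear, so the
leading term of one relation yields relations with every larger leading term: `a` is P-recursive
if and only if, after extending scalars to `K(X)`, its shifts span a finite-dimensional space.
Hence P-recursive sequences are closed under finite sums. The interleaving of the `b j` is the sum
of the sequences carrying `b j` on the residue class of `j` modulo `m` and vanishing elsewhere, and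
each of these inherits the recurrence of `b j`, with step `m` and coefficients `p ((X - j) / m)`.
-/

open Polynomial
open scoped nonZeroDivisors

section LinearAlgebra

theorem exists_smul_mem_span_image_Iio_of_not_linearIndependent {R M ι : Type*} [Ring R]
    [AddCommGroup M] [Module R M] [LinearOrder ι] {v : ι → M} (hv : ¬ LinearIndependent R v) :
    ∃ d, ∃ c : R, c ≠ 0 ∧ c • v d ∈ Submodule.span R (v '' Set.Iio d) := by
  rw [linearIndependent_iff] at hv
  push Not at hv
  obtain ⟨l, hl, hl0⟩ := hv
  have hne : l.support.Nonempty := Finsupp.support_nonempty_iff.2 hl0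
  have hd : l.support.max' hne ∈ l.support := l.support.max'_mem hne
  refine ⟨l.support.max' hne, l (l.support.max' hne), Finsupp.mem_support_iff.1 hd, ?_⟩
  rw [Finsupp.linearCombination_apply, Finsupp.sum, ← Finset.add_sum_erase _ _ hd] at hl
  rw [eq_neg_of_add_eq_zero_left hl]
  refine Submodule.neg_mem _ (Submodule.sum_mem _ fun k hk ↦ Submodule.smul_mem _ _ ?_)
  exact Submodule.subset_span ⟨k, Finset.lt_max'_of_mem_erase_max' _ hne hk, rfl⟩

theorem linearIndependent_of_semilinear_comp {R S M N ι : Type*} [Ring R] [Ring S]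
    [AddCommGroup M] [AddCommGroup N] [Module R M] [Module S N] {v : ι → M}
    (φ : S →+* R) (hφ : Function.Surjective φ) (T : M →+ N)
    (hT : ∀ (r : S) (x : M), T (φ r • x) = r • T x) (hv : LinearIndependent S (T ∘ v)) :
    LinearIndependent R v := by
  rw [linearIndependent_iff'] at hv ⊢
  intro s g hg i hi
  choose q hq using fun i ↦ hφ (g i)
  have hrel : ∑ i ∈ s, q i • (T ∘ v) i = 0 := by
    simp only [Function.comp_apply, ← hT, hq, ← map_sum, hg, map_zero]
  rw [← hq i, hv s q hrel i hi, map_zero]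

theorem range_subset_span_image_Iio {R M ι : Type*} [Semiring R] [AddCommMonoid M] [Module R M]
    [LinearOrder ι] [WellFoundedLT ι] {v : ι → M} {d : ι}
    (h : ∀ i ≥ d, v i ∈ Submodule.span R (v '' Set.Iio i)) :
    Set.range v ⊆ Submodule.span R (v '' Set.Iio d) := by
  rintro _ ⟨i, rfl⟩
  induction i using WellFoundedLT.induction with
  | _ i ih =>
    obtain hid | hid := lt_or_ge i d
    · exact Submodule.subset_span ⟨i, hid, rfl⟩
    · exact Submodule.span_le.2 (Set.image_subset_iff.2 ih) (h i hid)

theorem map_mem_span_of_smul_mem_span {R F M V : Type*} [CommRing R] [Field F] [Algebra R F]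
    [FaithfulSMul R F] [AddCommGroup M] [Module R M] [AddCommGroup V] [Module R V] [Module F V]
    [IsScalarTower R F V] (f : M →ₗ[R] V) {c : R} (hc : c ≠ 0) {x : M} {s : Set M}
    (hx : c • x ∈ Submodule.span R s) : f x ∈ Submodule.span F (f '' s) := by
  have hc' : algebraMap R F c ≠ 0 := by simpa using hc
  rw [← Submodule.smul_mem_iff _ hc', algebraMap_smul, ← map_smul]
  apply Submodule.span_subset_span R F
  rw [← Submodule.map_span]
  exact Submodule.mem_map_of_mem hx

end LinearAlgebra

noncomputable section Sequences

variable {K : Type*} [Field K]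

/-- The `K[X]`-module structure on sequences in which `p` sends `a` to `n ↦ p(n) a(n)`, so that
recurrences with polynomial coefficients are linear relations. -/
local instance polynomialModuleSeq : Module K[X] (ℕ → K) :=
  (RingHom.pi fun n : ℕ ↦ evalRingHom (n : K)).toModule

theorem seq_smul_apply (p : K[X]) (a : ℕ → K) (n : ℕ) :
    (p • a) n = p.eval (n : K) * a n := rfl

/-- The shift operator `a ↦ a(· + i)` on sequences, through which recurrences are expressed. It is
semilinear for `p(X) ↦ p(X + i)`. -/
def seqShift (i : ℕ) : (ℕ → K) →ₛₗ[(taylorAlgHom (i : K) : K[X] →+* K[X])] (ℕ → K) where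
  toFun a n := a (n + i)
  map_add' _ _ := rfl
  map_smul' p a := by
    ext n
    simp [seq_smul_apply, taylor_eval]

theorem seqShift_apply (i : ℕ) (a : ℕ → K) (n : ℕ) : seqShift i a n = a (n + i) := rfl

theorem seqShift_seqShift (i j : ℕ) (a : ℕ → K) :
    seqShift i (seqShift j a) = seqShift (i + j) a := by
  ext n
  simp only [seqShift_apply, add_assoc]

theorem sum_smul_seqShift_apply {ι : Type*} (s : Finset ι) (p : ι → K[X]) (k : ι → ℕ) (a : ℕ → K)
    (n : ℕ) : (∑ i ∈ s, p i • seqShift (k i) a) n = ∑ i ∈ s, (p i).eval (n : K) * a (n + k i) := by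
  simp only [Finset.sum_apply, seq_smul_apply, seqShift_apply]

theorem isPRecursive_iff_not_linearIndependent {a : ℕ → K} :
    IsPRecursive a ↔ ¬ LinearIndependent K[X] (fun i ↦ seqShift i a) := by
  constructor
  · rintro ⟨d, p, ⟨i, hi⟩, h⟩ hli
    have hfin := Fintype.linearIndependent_iff.1 (hli.comp _ (Fin.val_injective (n := d + 1)))
    refine hi (hfin p ?_ i)
    ext n
    exact (sum_smul_seqShift_apply _ _ _ _ _).trans (h n)
  · intro hli
    rw [linearIndependent_iff'] at hli
    push Not at hli
    obtain ⟨s, p, hp, i, hi, hpi⟩ := hli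
    have hs : s ⊆ Finset.range (s.sup id + 1) := s.subset_range_sup_succ
    refine ⟨s.sup id, fun k ↦ if (k : ℕ) ∈ s then p k else 0,
      ⟨⟨i, Finset.mem_range.1 (hs hi)⟩, by simpa [hi] using hpi⟩, fun n ↦ ?_⟩
    rw [Fin.sum_univ_eq_sum_range (fun k ↦ (if k ∈ s then p k else 0).eval (n : K) * a (n + k))]
    rw [← Finset.sum_subset hs fun k _ hk ↦ by simp [hk]]
    rw [Finset.sum_congr rfl fun k hk ↦ by rw [if_pos hk]]
    rw [← sum_smul_seqShift_apply, hp, Pi.zero_apply]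

/-- The canonical map from the module of sequences to its localization at the nonzero polynomials,
which is a `K(X)`-vector space. It kills the sequences annihilated by a nonzero polynomial. -/
abbrev seqLocalize : (ℕ → K) →ₗ[K[X]] LocalizedModule K[X]⁰ (ℕ → K) :=
  LocalizedModule.mkLinearMap K[X]⁰ (ℕ → K)

/-- The `K(X)`-vector space spanned by the shifts of `a`, which is finite-dimensional exactly when
`a` is P-recursive. It is taken inside the localized module of sequences, because `K(X)` does not
act on sequences themselves. -/
def shiftSpan (a : ℕ → K) :
    Submodule (FractionRing K[X]) (LocalizedModule K[X]⁰ (ℕ → K)) :=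
  Submodule.span _ (Set.range fun i ↦ seqLocalize (seqShift i a))

theorem smul_seqShift_add_mem_span {a : ℕ → K} {d : ℕ} {c : K[X]}
    (h : c • seqShift d a ∈ Submodule.span K[X] ((fun i ↦ seqShift i a) '' Set.Iio d)) (e : ℕ) :
    taylor (e : K) c • seqShift (e + d) a ∈
      Submodule.span K[X] ((fun i ↦ seqShift i a) '' Set.Iio (e + d)) := by
  have hle : Submodule.span K[X] ((fun i ↦ seqShift i a) '' Set.Iio d) ≤
      (Submodule.span K[X] ((fun i ↦ seqShift i a) '' Set.Iio (e + d))).comap (seqShift e) := by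
    rw [Submodule.span_le]
    rintro _ ⟨i, hi, rfl⟩
    refine Submodule.subset_span ⟨e + i, Nat.add_lt_add_left hi e, ?_⟩
    exact (seqShift_seqShift e i a).symm
  have hshift := hle h
  rwa [Submodule.mem_comap, map_smulₛₗ, seqShift_seqShift] at hshift

theorem IsPRecursive.finiteDimensional_shiftSpan {a : ℕ → K} (ha : IsPRecursive a) :
    FiniteDimensional (FractionRing K[X]) (shiftSpan a) := by
  have hdep := isPRecursive_iff_not_linearIndependent.1 ha
  obtain ⟨d, c, hc, hmem⟩ := exists_smul_mem_span_image_Iio_of_not_linearIndependent hdep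
  have hlead : ∀ i ≥ d, seqLocalize (seqShift i a) ∈
      Submodule.span (FractionRing K[X]) ((fun i ↦ seqLocalize (seqShift i a)) '' Set.Iio i) := by
    intro i hi
    obtain ⟨e, rfl⟩ := Nat.exists_eq_add_of_le' hi
    have hspan := map_mem_span_of_smul_mem_span (F := FractionRing K[X]) seqLocalize
      ((taylor_eq_zero _ _).not.2 hc) (smul_seqShift_add_mem_span hmem e)
    rwa [Set.image_image] at hspan
  have := FiniteDimensional.span_of_finite (FractionRing K[X])
    ((Set.finite_Iio d).image fun i ↦ seqLocalize (seqShift i a))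
  exact Submodule.finiteDimensional_of_le (Submodule.span_le.2 (range_subset_span_image_Iio hlead))

theorem isPRecursive_iff_finiteDimensional_shiftSpan {a : ℕ → K} :
    IsPRecursive a ↔ FiniteDimensional (FractionRing K[X]) (shiftSpan a) := by
  refine ⟨IsPRecursive.finiteDimensional_shiftSpan, fun hfin ↦ ?_⟩
  rw [isPRecursive_iff_not_linearIndependent]
  intro hli
  have hloc : LinearIndependent (FractionRing K[X]) (fun i ↦ seqLocalize (seqShift i a)) :=
    hli.of_isLocalizedModule (FractionRing K[X]) K[X]⁰ seqLocalize
  have : Finite ℕ := by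
    rw [shiftSpan] at hfin
    exact (linearIndependent_span hloc).finite
  exact not_finite ℕ

theorem shiftSpan_sum_le {ι : Type*} (s : Finset ι) (a : ι → ℕ → K) :
    shiftSpan (∑ j ∈ s, a j) ≤ ⨆ j : s, shiftSpan (a j) := by
  refine Submodule.span_le.2 ?_
  rintro _ ⟨i, rfl⟩
  simp only [map_sum]
  refine Submodule.sum_mem _ fun j hj ↦ ?_
  exact le_iSup (fun j : s ↦ shiftSpan (a j)) ⟨j, hj⟩ (Submodule.subset_span ⟨i, rfl⟩)

theorem IsPRecursive.sum {ι : Type*} {s : Finset ι} {a : ι → ℕ → K}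
    (ha : ∀ j ∈ s, IsPRecursive (a j)) : IsPRecursive (∑ j ∈ s, a j) := by
  simp only [isPRecursive_iff_finiteDimensional_shiftSpan] at ha ⊢
  have (j : s) := ha j j.2
  exact Submodule.finiteDimensional_of_le (shiftSpan_sum_le s a)

/-- The operator spreading a sequence over the residue class of `j` modulo `m`: the term `a(q)` is
moved to the index `m * q + j`, and all indices outside that class carry zero. It splits an
interleaving into a sum. For `j ≥ m > 0` it is the zero map. -/
def seqSpread (m j : ℕ) : (ℕ → K) →+ (ℕ → K) where
  toFun a n := if n % m = j then a (n / m) else 0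
  map_zero' := by ext; simp
  map_add' a b := by ext n; by_cases h : n % m = j <;> simp [h]

theorem seqSpread_apply (m j : ℕ) (a : ℕ → K) (n : ℕ) :
    seqSpread m j a n = if n % m = j then a (n / m) else 0 := rfl

theorem seqSpread_comp_smul (m j : ℕ) (p : K[X]) (a : ℕ → K) :
    seqSpread m j (p.comp (C (m : K) * X + C (j : K)) • a) = p • seqSpread m j a := by
  ext n
  simp only [seqSpread_apply, seq_smul_apply]
  split_ifs with hn
  · have hcast : (m : K) * (n / m : ℕ) + j = n := by
      rw [← hn, ← Nat.cast_mul, ← Nat.cast_add, Nat.div_add_mod]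
    simp [hcast]
  · simp

theorem seqSpread_seqShift {m : ℕ} (hm : 0 < m) (j i : ℕ) (a : ℕ → K) :
    seqSpread m j (seqShift i a) = seqShift (m * i) (seqSpread m j a) := by
  ext n
  simp only [seqSpread_apply, seqShift_apply, Nat.add_mul_mod_self_left,
    Nat.add_mul_div_left _ _ hm]

theorem IsPRecursive.spread {m : ℕ} (hm : (m : K) ≠ 0) (j : ℕ) {a : ℕ → K}
    (ha : IsPRecursive a) : IsPRecursive (seqSpread m j a) := by
  have hm0 : 0 < m := Nat.pos_of_ne_zero fun h ↦ hm (by rw [h, Nat.cast_zero])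
  have := invertibleOfNonzero hm
  rw [isPRecursive_iff_not_linearIndependent] at ha ⊢
  contrapose! ha
  have hstep : LinearIndependent K[X] (seqSpread m j ∘ fun i ↦ seqShift i a) := by
    simpa only [Function.comp_def, seqSpread_seqShift hm0] using
      ha.comp (m * ·) (mul_right_injective₀ hm0.ne')
  exact linearIndependent_of_semilinear_comp (algEquivCMulXAddC (m : K) (j : K) : K[X] →+* K[X])
    (algEquivCMulXAddC (m : K) (j : K)).surjective _ (seqSpread_comp_smul m j) hstep

theorem eq_sum_seqSpread {m : ℕ} (hm : 0 < m) {b : Fin m → ℕ → K} {s : ℕ → K}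
    (hs : ∀ (q : ℕ) (j : ℕ) (hj : j < m), s (m * q + j) = b ⟨j, hj⟩ q) :
    s = ∑ j : Fin m, seqSpread m j (b j) := by
  ext n
  have hn : n % m < m := Nat.mod_lt n hm
  rw [Finset.sum_apply, Finset.sum_eq_single ⟨n % m, hn⟩]
  · rw [seqSpread_apply, if_pos rfl, ← hs, Nat.div_add_mod]
  · intro j _ hj
    exact if_neg fun h ↦ hj (Fin.ext h.symm)
  · simp

end Sequences

theorem stmt7_general {K : Type*} [Field K] (m : ℕ) (hm : (m : K) ≠ 0)
    (b : Fin m → ℕ → K) (hb : ∀ j : Fin m, IsPRecursive (b j))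
    (s : ℕ → K)
    (hs : ∀ (q : ℕ) (j : ℕ) (hj : j < m), s (m * q + j) = b ⟨j, hj⟩ q) :
    IsPRecursive s := by
  have hm0 : 0 < m := Nat.pos_of_ne_zero fun h ↦ hm (by rw [h, Nat.cast_zero])
  rw [eq_sum_seqSpread hm0 hs]
  exact IsPRecursive.sum fun j _ ↦ (hb j).spread hm j

theorem stmt7 {K : Type*} [Field K] [CharZero K] (m : ℕ) (hm : 0 < m)
    (b : Fin m → ℕ → K) (hb : ∀ j : Fin m, IsPRecursive (b j))
    (s : ℕ → K)
    (hs : ∀ (q : ℕ) (j : ℕ) (hj : j < m), s (m * q + j) = b ⟨j, hj⟩ q) :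
    IsPRecursive s :=
  stmt7_general m (Nat.cast_ne_zero.2 hm.ne') b hb s hs
end

section
/- For every positive integer n, the number of quadruples (w, x, y, z) ∈ {1, …, n}⁴ such that min(|w−x|, |w−y|) = min(|x−y|, |x−z|) equals 4/9 + (31/12)·n − 3·n² + (67/36)·n³ − (n/4)·χ_{n≡0 (mod 2)} − (4/9)·χ_{n≡0 (mod 3)} − (8/9)·χ_{n≡1 (mod 3)} (as a rational number). -/
/-!
Sort the quadruples by the common value `m` of the two minima. Once `x` and `y` are fixed, `w` and
`z` are independent, so the level `m` contributes a sum over `(x, y)` of products of two counts, and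
the reflection `i ↦ n - 1 - i` reduces this sum to `x < y`. For `m > 0` each product is a sum of
Iverson brackets `[p ≤ x, x + g ≤ y < q]`, plus one rectangle when `y = x + m`. Each such bracket
sums to a triangular number, and the level contributes `7 a ^ 2 + n a + 4 b ^ 2`, where `a` and `b`
are the positive parts of `n - 2 m` and `n - 3 m`. Summing over `m` gives recurrences relating `n`
to `n + 2` and `n + 3`; these produce the terms depending on `n` modulo 2 and 3.
-/

open Finset

/-- Iverson bracket: `1` if `P` holds and `0` otherwise. -/
local notation "𝟙[" P "]" => (if P then (1 : ℕ) else 0)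

theorem choose_two_add_succ_choose_two (k : ℕ) : k.choose 2 + (k + 1).choose 2 = k ^ 2 := by
  rw [Nat.choose_succ_succ' k 1, Nat.choose_one_right, add_left_comm, ← two_mul,
    Nat.choose_two_right, Nat.mul_div_cancel' (Nat.even_mul_pred_self k).two_dvd]
  obtain _ | k := k
  · rfl
  · rw [Nat.add_sub_cancel]
    ring

theorem sum_range_sub_mul_succ {M : Type*} [AddCommMonoid M] {f : ℕ → M} (hf : f 0 = 0)
    {k : ℕ} (hk : 0 < k) (n : ℕ) :
    ∑ i ∈ range (n + k), f (n + k - k * (i + 1)) = f n + ∑ i ∈ range n, f (n - k * (i + 1)) := by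
  obtain ⟨l, rfl⟩ := Nat.exists_eq_add_one_of_ne_zero hk.ne'
  have shift (i : ℕ) : n + (l + 1) - (l + 1) * (i + 1) = n - (l + 1) * i := by
    rw [mul_add_one, Nat.add_sub_add_right]
  have tail (i : ℕ) : f (n - (l + 1) * (n + i + 1)) = 0 := by
    rw [Nat.sub_eq_zero_of_le (by nlinarith), hf]
  simp only [shift]
  rw [← add_assoc, sum_range_succ', mul_zero, Nat.sub_zero, add_comm, sum_range_add,
    sum_eq_zero fun i _ ↦ tail i, add_zero]

theorem cast_sum_range_sub_two_mul_sq : ∀ n : ℕ,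
    ((∑ i ∈ range n, (n - 2 * (i + 1)) ^ 2 : ℕ) : ℚ) = n * (n - 1) * (n - 2) / 6
  | 0 => by simp
  | 1 => by simp
  | n + 2 => by
    rw [sum_range_sub_mul_succ (f := fun j : ℕ ↦ j ^ 2) (by norm_num) two_pos, Nat.cast_add,
      cast_sum_range_sub_two_mul_sq n]
    push_cast
    ring

theorem cast_sum_range_sub_two_mul : ∀ n : ℕ,
    ((∑ i ∈ range n, (n - 2 * (i + 1)) : ℕ) : ℚ) =
      ((n - 1) ^ 2 - if n % 2 = 0 then 1 else 0) / 4
  | 0 => by simp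
  | 1 => by simp
  | n + 2 => by
    rw [sum_range_sub_mul_succ (f := fun j ↦ j) rfl two_pos, Nat.add_mod_right, Nat.cast_add,
      cast_sum_range_sub_two_mul n]
    push_cast
    ring

theorem cast_sum_range_sub_three_mul_sq : ∀ n : ℕ,
    ((∑ i ∈ range n, (n - 3 * (i + 1)) ^ 2 : ℕ) : ℚ) =
      (2 * n ^ 3 - 9 * n ^ 2 + 9 * n + 2 - 2 * (if n % 3 = 0 then 1 else 0)
        - 4 * (if n % 3 = 1 then 1 else 0)) / 18
  | 0 => by simp
  | 1 => by norm_num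
  | 2 => by norm_num [sum_range_succ]
  | n + 3 => by
    rw [sum_range_sub_mul_succ (f := fun j : ℕ ↦ j ^ 2) (by norm_num) three_pos,
      Nat.add_mod_right, Nat.cast_add, cast_sum_range_sub_three_mul_sq n]
    push_cast
    ring

theorem sum_range_ite_le_and_add_le {n q : ℕ} (p g : ℕ) (hq : q < n) :
    ∑ x ∈ range n, 𝟙[p ≤ x ∧ x + g ≤ q] = q + 1 - p - g := by
  have : ({x ∈ range n | p ≤ x ∧ x + g ≤ q} : Finset ℕ) = Ico p (q + 1 - g) := by
    ext x; simp only [mem_filter, mem_range, mem_Ico]; omega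
  rw [← card_filter, this, Nat.card_Ico, Nat.sub_right_comm]

theorem sum_range_sum_range_ite_add_le {n : ℕ} (p g : ℕ) : ∀ {q : ℕ}, q ≤ n →
    ∑ x ∈ range n, ∑ y ∈ range n, 𝟙[p ≤ x ∧ x + g ≤ y ∧ y < q] = (q - p - g + 1).choose 2
  | 0, _ => by simp
  | q + 1, hq => by
    have split (x y : ℕ) : 𝟙[p ≤ x ∧ x + g ≤ y ∧ y < q + 1] =
        𝟙[p ≤ x ∧ x + g ≤ y ∧ y < q] + if y = q then 𝟙[p ≤ x ∧ x + g ≤ q] else 0 := by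
      grind
    simp only [split, sum_add_distrib, sum_range_sum_range_ite_add_le p g (Nat.le_of_succ_le hq),
      sum_ite_eq', mem_range.2 hq, if_true, sum_range_ite_le_and_add_le p g hq]
    rcases le_or_gt (p + g) q with h | h
    · rw [show q + 1 - p - g = q - p - g + 1 by omega,
        Nat.choose_succ_succ' (q - p - g + 1) 1, Nat.choose_one_right, add_comm]
    · rw [show q - p - g = 0 by omega]
      obtain h | h : q + 1 - p - g = 0 ∨ q + 1 - p - g = 1 := by omega
      all_goals simp [h]

theorem sum_range_ite_lt_mul_sum_range_ite_le {n a : ℕ} (ha : a ≤ n) (b : ℕ) :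
    (∑ x ∈ range n, 𝟙[x < a]) * ∑ z ∈ range n, 𝟙[b ≤ z] = a * (n - b) := by
  have below : ({x ∈ range n | x < a} : Finset ℕ) = range a := by
    ext x; simp only [mem_filter, mem_range]; omega
  have above : ({z ∈ range n | b ≤ z} : Finset ℕ) = Ico b n := by
    ext z; simp only [mem_filter, mem_range, mem_Ico]; omega
  rw [← card_filter, ← card_filter, below, above, card_range, Nat.card_Ico]

theorem sum_sum_ite_eq_card_mul_card {α β ι : Type*} [DecidableEq ι] (s : Finset α) (t : Finset β)
    (u : Finset ι) (f : α → ι) (g : β → ι) (hf : ∀ a ∈ s, f a ∈ u) :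
    ∑ a ∈ s, ∑ b ∈ t, 𝟙[f a = g b] = ∑ i ∈ u, #{a ∈ s | f a = i} * #{b ∈ t | g b = i} := by
  simp only [card_filter, sum_mul_sum]
  conv_rhs => rw [sum_comm]
  refine sum_congr rfl fun a ha ↦ ?_
  rw [sum_comm]
  refine sum_congr rfl fun b _ ↦ ?_
  simp only [ite_mul, one_mul, zero_mul, sum_ite_eq, hf a ha, if_true]
  exact if_congr eq_comm rfl rfl

theorem sum_range_sum_range_of_reflect {M : Type*} [AddCommMonoid M] {n : ℕ} {F : ℕ → ℕ → M}
    (diag : ∀ x, F x x = 0)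
    (reflect : ∀ x < n, ∀ y < n, F (n - 1 - x) (n - 1 - y) = F x y) :
    ∑ x ∈ range n, ∑ y ∈ range n, F x y =
      2 • ∑ x ∈ range n, ∑ y ∈ range n, if x < y then F x y else 0 := by
  have split (x y : ℕ) :
      F x y = (if x < y then F x y else 0) + if y < x then F x y else 0 := by
    obtain h | rfl | h := lt_trichotomy x y
    · rw [if_pos h, if_neg h.not_gt, add_zero]
    · simp only [lt_irrefl, if_false, add_zero, diag]
    · rw [if_neg h.not_gt, if_pos h, zero_add]
  have mirror : ∑ x ∈ range n, ∑ y ∈ range n, (if y < x then F x y else 0) =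
      ∑ x ∈ range n, ∑ y ∈ range n, if x < y then F x y else 0 := by
    rw [← sum_range_reflect]
    refine sum_congr rfl fun x hx ↦ ?_
    rw [← sum_range_reflect]
    refine sum_congr rfl fun y hy ↦ ?_
    rw [mem_range] at hx hy
    rw [reflect x hx y hy]
    exact if_congr (by omega) rfl rfl
  rw [two_nsmul]
  nth_rw 2 [← mirror]
  simp_rw [← sum_add_distrib, ← split]

/-- The number of `w` with `min |w - x| |w - y| = m`. Here and below the points range over
`{0, …, n - 1}` instead of `{1, …, n}`. -/
def leftCount (n m x y : ℕ) : ℕ := #{w ∈ range n | min (w.dist x) (w.dist y) = m}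

/-- The number of `z` with `min |x - y| |x - z| = m`. -/
def rightCount (n m x y : ℕ) : ℕ := #{z ∈ range n | min (x.dist y) (x.dist z) = m}

/-- The number of quadruples `(w, x, y, z)` for which both minima are equal to `m`, counted through
the middle pair `(x, y)`: once it is fixed, `w` and `z` are independent. -/
def levelCount (n m : ℕ) : ℕ :=
  ∑ x ∈ range n, ∑ y ∈ range n, leftCount n m x y * rightCount n m x y

section LevelCount

variable {n m x y : ℕ}

theorem leftCount_of_add_le (hm : 0 < m) (hxy : x + m ≤ y) (hy : y < n) :
    leftCount n m x y = 𝟙[m ≤ x] + 𝟙[y + m < n] + 𝟙[x + 2 * m ≤ y] + 𝟙[x + 2 * m < y] := by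
  -- The candidates are `x - m`, `y + m`, `x + m`, `y - m`; the last two coincide if `y = x + 2m`,
  -- so the last bracket is strict.
  have split (w : ℕ) : 𝟙[min (w.dist x) (w.dist y) = m] =
      (if w = x - m then 𝟙[m ≤ x] else 0) + 𝟙[w = y + m] +
        (if w = x + m then 𝟙[x + 2 * m ≤ y] else 0) +
        if w = y - m then 𝟙[x + 2 * m < y] else 0 := by
    simp only [Nat.dist]
    grind
  simp only [leftCount, card_filter, split, sum_add_distrib, sum_ite_eq', mem_range,
    show x - m < n by omega, show x + m < n by omega, show y - m < n by omega, if_true]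

theorem rightCount_of_dist_lt (h : x.dist y < m) : rightCount n m x y = 0 := by
  simp only [rightCount, card_eq_zero, filter_eq_empty_iff]
  exact fun _ _ ↦ ((min_le_left _ _).trans_lt h).ne

theorem rightCount_of_dist_eq (hm : 0 < m) (h : x.dist y = m) :
    rightCount n m x y = ∑ z ∈ range n, (𝟙[z + m ≤ x] + 𝟙[x + m ≤ z]) := by
  rw [rightCount, card_filter]
  refine sum_congr rfl fun z _ ↦ ?_
  rw [h]
  simp only [Nat.dist]
  grind

theorem rightCount_of_lt_dist (hm : 0 < m) (hx : x < n) (h : m < x.dist y) :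
    rightCount n m x y = 𝟙[m ≤ x] + 𝟙[x + m < n] := by
  have split (z : ℕ) : 𝟙[min (x.dist y) (x.dist z) = m] =
      (if z = x - m then 𝟙[m ≤ x] else 0) + 𝟙[z = x + m] := by
    generalize x.dist y = d at h
    simp only [Nat.dist]
    grind
  simp only [rightCount, card_filter, split, sum_add_distrib, sum_ite_eq', mem_range,
    show x - m < n by omega, if_true]

theorem leftCount_zero (hx : x < n) (hy : y < n) :
    leftCount n 0 x y = if x = y then 1 else 2 := by
  have : ({w ∈ range n | min (w.dist x) (w.dist y) = 0} : Finset ℕ) = {x, y} := by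
    ext w
    simp only [mem_filter, mem_range, mem_insert, mem_singleton]
    simp only [Nat.dist]
    omega
  rw [leftCount, this]
  split_ifs with h
  · simp [h]
  · exact card_pair h

theorem rightCount_zero (hx : x < n) :
    rightCount n 0 x y = if x = y then n else 1 := by
  split_ifs with h
  · simp [rightCount, h]
  · have : ({z ∈ range n | min (x.dist y) (x.dist z) = 0} : Finset ℕ) = {x} := by
      ext z
      simp only [mem_filter, mem_range, mem_singleton]
      simp only [Nat.dist]
      omega
    rw [rightCount, this, card_singleton]

theorem levelCount_zero_add_two_mul (n : ℕ) : levelCount n 0 + 2 * n = 3 * n ^ 2 := by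
  have split : ∀ x ∈ range n, ∀ y ∈ range n, leftCount n 0 x y * rightCount n 0 x y +
      (if x = y then 2 else 0) = 2 + if x = y then n else 0 := by
    intro x hx y hy
    rw [leftCount_zero (mem_range.1 hx) (mem_range.1 hy), rightCount_zero (mem_range.1 hx)]
    split_ifs <;> ring
  have total := sum_congr rfl fun x hx ↦ sum_congr rfl (split x hx)
  simp only [sum_add_distrib, sum_ite_eq, sum_ite_mem, sum_const, inter_self, card_range,
    smul_eq_mul] at total
  rw [levelCount]
  linarith

theorem dist_reflect {a b : ℕ} (ha : a < n) (hb : b < n) :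
    (n - 1 - a).dist (n - 1 - b) = a.dist b := by
  simp only [Nat.dist]; omega

theorem leftCount_reflect (hx : x < n) (hy : y < n) :
    leftCount n m (n - 1 - x) (n - 1 - y) = leftCount n m x y := by
  simp only [leftCount, card_filter]
  rw [← sum_range_reflect]
  refine sum_congr rfl fun w hw ↦ ?_
  rw [dist_reflect (mem_range.1 hw) hx, dist_reflect (mem_range.1 hw) hy]

theorem rightCount_reflect (hx : x < n) (hy : y < n) :
    rightCount n m (n - 1 - x) (n - 1 - y) = rightCount n m x y := by
  simp only [rightCount, card_filter]
  rw [← sum_range_reflect]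
  refine sum_congr rfl fun z hz ↦ ?_
  rw [dist_reflect hx (mem_range.1 hz), dist_reflect hx hy]

theorem sum_ite_eq_add_leftCount_mul_rightCount (hm : 0 < m) :
    ∑ x ∈ range n, ∑ y ∈ range n,
      (if y = x + m then leftCount n m x y * rightCount n m x y else 0) =
    3 * (n - 2 * m + 1).choose 2 + (n - 3 * m + 1).choose 2 + (n - 2 * m) * m := by
  have split : ∀ x ∈ range n,
      (if x + m < n then leftCount n m x (x + m) * rightCount n m x (x + m) else 0) =
      ∑ z ∈ range n, (𝟙[0 ≤ z ∧ z + m ≤ x ∧ x < n - m] + 𝟙[m ≤ x ∧ x + m ≤ z ∧ z < n] +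
        𝟙[0 ≤ z ∧ z + m ≤ x ∧ x < n - 2 * m] + 𝟙[0 ≤ x ∧ x + m ≤ z ∧ z < n - m] +
        𝟙[x < n - 2 * m] * 𝟙[n - m ≤ z]) := by
    intro x hx
    rw [mem_range] at hx
    by_cases h : x + m < n
    · rw [if_pos h, leftCount_of_add_le hm le_rfl h,
        rightCount_of_dist_eq hm (by simp only [Nat.dist]; omega), mul_sum]
      refine sum_congr rfl fun z hz ↦ ?_
      grind
    · rw [if_neg h, eq_comm]
      refine sum_eq_zero fun z hz ↦ ?_
      grind
  have rectangle : (n - 2 * m) * (n - (n - m)) = (n - 2 * m) * m := by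
    obtain h | h : n - 2 * m = 0 ∨ n - (n - m) = m := by omega
    · rw [h, zero_mul, zero_mul]
    · rw [h]
  simp only [sum_ite_eq', mem_range]
  rw [sum_congr rfl split]
  simp only [sum_add_distrib]
  rw [← sum_mul_sum, sum_range_ite_lt_mul_sum_range_ite_le (Nat.sub_le n (2 * m)), rectangle,
    sum_comm, sum_range_sum_range_ite_add_le 0 m (Nat.sub_le n m),
    sum_range_sum_range_ite_add_le m m (le_refl n), sum_comm,
    sum_range_sum_range_ite_add_le 0 m (Nat.sub_le n (2 * m)),
    show n - m - 0 - m = n - 2 * m by omega, show n - m - m = n - 2 * m by omega,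
    show n - 2 * m - 0 - m = n - 3 * m by omega]
  ring

theorem sum_ite_add_lt_leftCount_mul_rightCount (hm : 0 < m) :
    ∑ x ∈ range n, ∑ y ∈ range n,
      (if x + m < y then leftCount n m x y * rightCount n m x y else 0) =
    4 * (n - 2 * m).choose 2 + (n - 2 * m + 1).choose 2 + 2 * (n - 3 * m).choose 2 +
      (n - 3 * m + 1).choose 2 := by
  have split : ∀ x ∈ range n, ∀ y ∈ range n,
      (if x + m < y then leftCount n m x y * rightCount n m x y else 0) =
      2 * 𝟙[m ≤ x ∧ x + (m + 1) ≤ y ∧ y < n] + 𝟙[0 ≤ x ∧ x + (m + 1) ≤ y ∧ y < n - m] +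
      𝟙[0 ≤ x ∧ x + 2 * m ≤ y ∧ y < n] + 𝟙[0 ≤ x ∧ x + (2 * m + 1) ≤ y ∧ y < n] +
      𝟙[m ≤ x ∧ x + (m + 1) ≤ y ∧ y < n - m] + 𝟙[m ≤ x ∧ x + 2 * m ≤ y ∧ y < n] +
      𝟙[m ≤ x ∧ x + (2 * m + 1) ≤ y ∧ y < n] := by
    intro x hx y hy
    rw [mem_range] at hx hy
    by_cases h : x + m < y
    · rw [if_pos h, leftCount_of_add_le hm h.le hy,
        rightCount_of_lt_dist hm hx (by simp only [Nat.dist]; omega)]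
      grind
    · rw [if_neg h]
      grind
  have pred (k : ℕ) : (k - 1 + 1).choose 2 = k.choose 2 := by cases k <;> rfl
  have triangle (p g : ℕ) := sum_range_sum_range_ite_add_le p g (le_refl n)
  have triangle' (p g : ℕ) := sum_range_sum_range_ite_add_le p g (Nat.sub_le n m)
  rw [sum_congr rfl fun x hx ↦ sum_congr rfl (split x hx)]
  simp only [sum_add_distrib, ← mul_sum, triangle, triangle']
  rw [show n - m - (m + 1) = n - 2 * m - 1 by omega,
    show n - m - 0 - (m + 1) = n - 2 * m - 1 by omega,
    show n - 0 - 2 * m = n - 2 * m by omega,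
    show n - 0 - (2 * m + 1) = n - 2 * m - 1 by omega,
    show n - m - m - (m + 1) = n - 3 * m - 1 by omega,
    show n - m - 2 * m = n - 3 * m by omega,
    show n - m - (2 * m + 1) = n - 3 * m - 1 by omega, pred, pred]
  ring

theorem levelCount_of_pos (hm : 0 < m) :
    levelCount n m = 7 * (n - 2 * m) ^ 2 + n * (n - 2 * m) + 4 * (n - 3 * m) ^ 2 := by
  have split (x y : ℕ) :
      (if x < y then leftCount n m x y * rightCount n m x y else 0) =
      (if y = x + m then leftCount n m x y * rightCount n m x y else 0) +
      if x + m < y then leftCount n m x y * rightCount n m x y else 0 := by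
    obtain h | h := lt_or_ge (x.dist y) m
    · simp only [rightCount_of_dist_lt h, mul_zero, ite_self, add_zero]
    · simp only [Nat.dist] at h
      grind
  rw [levelCount, sum_range_sum_range_of_reflect]
  · simp only [split, sum_add_distrib, sum_ite_eq_add_leftCount_mul_rightCount hm,
      sum_ite_add_lt_leftCount_mul_rightCount hm, smul_eq_mul]
    have h₂ := choose_two_add_succ_choose_two (n - 2 * m)
    have h₃ := choose_two_add_succ_choose_two (n - 3 * m)
    have cross : n * (n - 2 * m) = (n - 2 * m) ^ 2 + 2 * ((n - 2 * m) * m) := by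
      obtain h | h := le_total n (2 * m)
      · simp [Nat.sub_eq_zero_of_le h]
      · obtain ⟨k, rfl⟩ := Nat.exists_eq_add_of_le h
        rw [Nat.add_sub_cancel_left]
        ring
    linarith
  · intro x
    rw [rightCount_of_dist_lt (by rwa [Nat.dist_self]), mul_zero]
  · intro x hx y hy
    rw [leftCount_reflect hx hy, rightCount_reflect hx hy]

end LevelCount

theorem sum_levelCount (n : ℕ) :
    ∑ m ∈ range (n + 1), levelCount n m + 2 * n =
      3 * n ^ 2 + 7 * ∑ i ∈ range n, (n - 2 * (i + 1)) ^ 2 +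
        n * ∑ i ∈ range n, (n - 2 * (i + 1)) + 4 * ∑ i ∈ range n, (n - 3 * (i + 1)) ^ 2 := by
  rw [sum_range_succ', sum_congr rfl fun m _ ↦ levelCount_of_pos m.succ_pos, add_assoc,
    levelCount_zero_add_two_mul, sum_add_distrib, sum_add_distrib, ← mul_sum, ← mul_sum, ← mul_sum]
  ring

theorem sum_Icc_one_eq_sum_range {M : Type*} [AddCommMonoid M] (f : ℕ → M) (n : ℕ) :
    ∑ i ∈ Icc 1 n, f i = ∑ i ∈ range n, f (i + 1) := by
  rw [range_eq_Ico, sum_Ico_add' f 0 n 1]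
  rfl

theorem card_quadruples_eq_sum_levelCount (n : ℕ) :
    #{p ∈ Icc 1 n ×ˢ Icc 1 n ×ˢ Icc 1 n ×ˢ Icc 1 n |
      min ((p.1 : ℤ) - p.2.1).natAbs ((p.1 : ℤ) - p.2.2.1).natAbs =
        min ((p.2.1 : ℤ) - p.2.2.1).natAbs ((p.2.1 : ℤ) - p.2.2.2).natAbs} =
      ∑ m ∈ range (n + 1), levelCount n m := by
  have natAbs_sub (a b : ℕ) : (((a + 1 : ℕ) : ℤ) - (b + 1 : ℕ)).natAbs = a.dist b := by
    simp only [Nat.dist]; omega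
  simp only [card_filter, sum_product, sum_Icc_one_eq_sum_range, natAbs_sub, levelCount]
  rw [sum_comm, sum_comm (s := range (n + 1))]
  refine sum_congr rfl fun x hx ↦ ?_
  rw [sum_comm, sum_comm (s := range (n + 1))]
  refine sum_congr rfl fun y hy ↦ ?_
  refine sum_sum_ite_eq_card_mul_card _ _ _ _ _ fun w hw ↦ ?_
  rw [mem_range] at *
  simp only [Nat.dist]
  omega

theorem stmt15 (n : ℕ) (hn : 0 < n) :
    (((Finset.Icc 1 n ×ˢ Finset.Icc 1 n ×ˢ Finset.Icc 1 n ×ˢ Finset.Icc 1 n).filter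
        (fun p : ℕ × ℕ × ℕ × ℕ =>
          min ((p.1 : ℤ) - p.2.1).natAbs ((p.1 : ℤ) - p.2.2.1).natAbs =
            min ((p.2.1 : ℤ) - p.2.2.1).natAbs ((p.2.1 : ℤ) - p.2.2.2).natAbs)).card : ℚ)
      = 4 / 9 + (31 / 12) * (n : ℚ) - 3 * (n : ℚ) ^ 2 + (67 / 36) * (n : ℚ) ^ 3
        - ((n : ℚ) / 4) * (if n % 2 = 0 then 1 else 0)
        - (4 / 9) * (if n % 3 = 0 then 1 else 0)
        - (8 / 9) * (if n % 3 = 1 then 1 else 0) := by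
  have total := congrArg (Nat.cast (R := ℚ)) (sum_levelCount n)
  rw [card_quadruples_eq_sum_levelCount]
  simp only [Nat.cast_add, Nat.cast_mul, Nat.cast_pow, Nat.cast_ofNat,
    cast_sum_range_sub_two_mul_sq, cast_sum_range_sub_two_mul,
    cast_sum_range_sub_three_mul_sq] at total
  linarith
end
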